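/- arXiv:1505.03957 — 2 statements merged into one kernel-verified Lean document; each statement's English description precedes it below -/
import Mathlib

section
/- Let f, g ∈ ℂ[T] be nonconstant polynomials. If f and g are multiplicatively independent (i.e., there is no nonzero (ν₁,ν₂) ∈ ℤ² with f^{ν₁} g^{ν₂} = 1 in ℂ(T)), then for all integers n, m ≥ 1, deg gcd(fⁿ − 1, gᵐ − 1) ≤ (11(d_f + d_g)²)^{min(d_f, d_g)}. -/
open Polynomial

/-!
Complex conjugation replaces roots of unity by one algebraic condition. At a common root `a` of
`f ^ n - 1` and `g ^ m - 1` the values `f(a)` and `g(a)` have modulus `1`, so `(a, ā)` lies on both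
curves `f(X) f̄(Y) = 1` and `g(X) ḡ(Y) = 1`. Restricting to `Y = ā` turns these equations into
multiples of `f - f(a)` and `g - g(a)`, so the resultant with respect to `Y` vanishes at `a` at
least to the order of the gcd. Hence the gcd divides that resultant, which has degree at most
`2 d_f d_g`.

If the resultant is zero, the curves share a component, on which `u = f(X) ^ d_g / g(X) ^ d_f`
has no poles: where `X = ∞` the orders of numerator and denominator cancel, where `Y = ∞` the same
happens after rewriting `u` as `ḡ(Y) ^ d_f / f̄(Y) ^ d_g`, and elsewhere the relations make `f(X)`
and `g(X)` units. So `u` is constant; if the gcd has a root, evaluating there shows that this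
constant is a root of unity, contradicting multiplicative independence.
-/

section Valuation

variable {k K Γ : Type*} [Field k] [Field K] [Algebra k K]

lemma isIntegral_of_forall_mem_valuationSubring {R : Type*} [CommRing R] [Algebra R K] {x : K}
    (h : ∀ V : ValuationSubring K, (∀ r : R, algebraMap R K r ∈ V) → x ∈ V) :
    IsIntegral R x := by
  have : IsIntegrallyClosedIn (integralClosure R K).toSubring K :=
    inferInstanceAs (IsIntegrallyClosedIn (integralClosure R K) K)
  change x ∈ (integralClosure R K).toSubring
  rw [Subring.eq_iInf_of_isIntegrallyClosedIn (R := (integralClosure R K).toSubring),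
    Subring.mem_iInf]
  exact fun V ↦ h V.1 fun r ↦ V.2 (algebraMap_mem (integralClosure R K) r)

variable [LinearOrderedCommGroupWithZero Γ] (v : Valuation K Γ) [v.IsTrivialOn k]

lemma valuation_aeval_le_one {x : K} (hx : v x ≤ 1) (p : k[X]) : v (aeval x p) ≤ 1 := by
  rw [aeval_eq_sum_range]
  refine v.map_sum_le fun i _ ↦ ?_
  rw [Algebra.smul_def, map_mul, map_pow]
  exact mul_le_one' (Valuation.IsTrivialOn.valuation_algebraMap_le_one v _) (pow_le_one' hx i)

variable {f F g G : k[X]} {t s : K}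

lemma valuation_aeval_pow_natDegree_le
    (hdeg : f.natDegree * G.natDegree = g.natDegree * F.natDegree)
    (hf : aeval t f * aeval s F = 1) (hg : aeval t g * aeval s G = 1) :
    v (aeval t f) ^ g.natDegree ≤ v (aeval t g) ^ f.natDegree := by
  have hvf : v (aeval t f) = (v (aeval s F))⁻¹ :=
    eq_inv_of_mul_eq_one_left (by rw [← map_mul, hf, map_one])
  have hvg : v (aeval t g) = (v (aeval s G))⁻¹ :=
    eq_inv_of_mul_eq_one_left (by rw [← map_mul, hg, map_one])
  have hpole {x : K} (hx : 1 < v x) {p : k[X]} (hp : aeval x p ≠ 0) :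
      v (aeval x p) = v x ^ p.natDegree :=
    valuation_aeval_eq_valuation_X_pow_natDegree_of_one_lt_valuation_X x hx
      (ne_zero_of_map (f := aeval x) hp)
  rcases lt_or_ge 1 (v t) with ht | ht
  · rw [hpole ht (left_ne_zero_of_mul_eq_one hf), hpole ht (left_ne_zero_of_mul_eq_one hg),
      ← pow_mul, ← pow_mul, mul_comm]
  rcases lt_or_ge 1 (v s) with hs | hs
  · rw [hvf, hvg, hpole hs (right_ne_zero_of_mul_eq_one hf),
      hpole hs (right_ne_zero_of_mul_eq_one hg), inv_pow, inv_pow, ← pow_mul, ← pow_mul,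
      mul_comm F.natDegree, mul_comm G.natDegree, hdeg]
  · have hg_ge : 1 ≤ v (aeval t g) := by
      rw [hvg]
      exact (one_le_inv₀ (by simpa [zero_lt_iff] using right_ne_zero_of_mul_eq_one hg)).2
        (valuation_aeval_le_one v hs G)
    exact (pow_le_one' (valuation_aeval_le_one v ht f) _).trans (one_le_pow_of_one_le' hg_ge _)

lemma isIntegral_aeval_pow_div_aeval_pow
    (hdeg : f.natDegree * G.natDegree = g.natDegree * F.natDegree)
    (hf : aeval t f * aeval s F = 1) (hg : aeval t g * aeval s G = 1) :
    IsIntegral k (aeval t f ^ g.natDegree / aeval t g ^ f.natDegree) := by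
  refine isIntegral_of_forall_mem_valuationSubring fun V hV ↦ ?_
  have : V.valuation.IsTrivialOn k :=
    .of_le_one _ fun c ↦ (V.valuation_le_one_iff _).2 (hV c)
  rw [← V.valuation_le_one_iff, map_div₀, map_pow, map_pow]
  exact div_le_one_of_le₀ (valuation_aeval_pow_natDegree_le _ hdeg hf hg) zero_le

lemma exists_pow_eq_C_mul_pow_of_transcendental [IsAlgClosed k] (ht : Transcendental k t)
    (hdeg : f.natDegree * G.natDegree = g.natDegree * F.natDegree)
    (hf : aeval t f * aeval s F = 1) (hg : aeval t g * aeval s G = 1) :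
    ∃ c, f ^ g.natDegree = C c * g ^ f.natDegree := by
  obtain ⟨c, hc⟩ := (isIntegral_aeval_pow_div_aeval_pow hdeg hf hg)
    |>.mem_range_algebraMap_of_minpoly_splits (K := k) (IsAlgClosed.splits _)
  refine ⟨c, transcendental_iff_injective.1 ht ?_⟩
  rw [eq_div_iff (pow_ne_zero _ (left_ne_zero_of_mul_eq_one hg))] at hc
  rw [map_pow, map_mul, map_pow, aeval_C, hc]

end Valuation

lemma natDegree_resultant_le {R : Type*} [CommRing R] {A B : R[X][X]} {a b : ℕ} (m n : ℕ)
    (hA : ∀ i, (A.coeff i).natDegree ≤ a) (hB : ∀ i, (B.coeff i).natDegree ≤ b) :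
    (resultant A B m n).natDegree ≤ m * b + n * a := by
  rw [resultant, Matrix.det_apply]
  refine natDegree_sum_le_of_forall_le _ _ fun σ _ ↦ ?_
  refine (natDegree_smul_le _ _).trans ((natDegree_prod_le _ _).trans ?_)
  have hleft (j : Fin m) :
      (sylvester A B m n (σ (j.castAdd n)) (j.castAdd n)).natDegree ≤ b := by
    simp only [sylvester, Matrix.of_apply, Fin.addCases_left]
    split_ifs
    exacts [hB _, by simp]
  have hright (j : Fin n) :
      (sylvester A B m n (σ (j.natAdd m)) (j.natAdd m)).natDegree ≤ a := by
    simp only [sylvester, Matrix.of_apply, Fin.addCases_right]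
    split_ifs
    exacts [hA _, by simp]
  rw [Fin.sum_univ_add]
  refine add_le_add ?_ ?_
  · simpa using Finset.sum_le_card_nsmul Finset.univ _ b fun j _ ↦ hleft j
  · simpa using Finset.sum_le_card_nsmul Finset.univ _ a fun j _ ↦ hright j

lemma dvd_resultant_of_dvd_eval {R : Type*} [CommRing R] {A B : R[X]} {d r : R}
    (hdeg : A.natDegree ≠ 0 ∨ B.natDegree ≠ 0) (hA : d ∣ A.eval r) (hB : d ∣ B.eval r) :
    d ∣ resultant A B := by
  obtain ⟨p, q, -, -, hpq⟩ := exists_mul_add_mul_eq_C_resultant A B le_rfl le_rfl hdeg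
  rw [← eval_C (x := r) (a := resultant A B), ← hpq, eval_add, eval_mul, eval_mul]
  exact dvd_add (hA.mul_right _) (hB.mul_right _)

lemma exists_common_root_of_resultant_eq_zero {R Ω : Type*} [CommRing R] [Field Ω]
    [IsAlgClosed Ω] [Algebra R Ω] [FaithfulSMul R Ω] {A B : R[X]} (h : resultant A B = 0) :
    ∃ s : Ω, aeval s A = 0 ∧ aeval s B = 0 := by
  have hinj := FaithfulSMul.algebraMap_injective R Ω
  have hΩ : resultant (A.map (algebraMap R Ω)) (B.map (algebraMap R Ω)) = 0 := by
    rw [natDegree_map_eq_of_injective hinj, natDegree_map_eq_of_injective hinj,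
      resultant_map_map, h, map_zero]
  simpa [isCoprime_iff_aeval_ne_zero_of_isAlgClosed Ω Ω] using (resultant_eq_zero_iff.1 hΩ).2

section Lemniscate

variable {R : Type*} [CommRing R]

/-- The polynomial `f(X) F(Y) - 1`, as a polynomial in `Y` over `R[X]`. When `F` is the complex
conjugate of `f ∈ ℂ[X]`, the points `(z, z̄)` on its zero locus are those with `|f(z)| = 1`. -/
noncomputable def lemniscate (f F : R[X]) : R[X][X] := C f * F.map C - 1

lemma natDegree_coeff_lemniscate_le (f F : R[X]) (i : ℕ) :
    ((lemniscate f F).coeff i).natDegree ≤ f.natDegree := by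
  rw [lemniscate, coeff_sub, coeff_C_mul, coeff_map, coeff_one]
  refine (natDegree_sub_le _ _).trans (max_le (natDegree_mul_C_le _ _) ?_)
  split_ifs <;> simp

lemma natDegree_lemniscate_le (f F : R[X]) : (lemniscate f F).natDegree ≤ F.natDegree := by
  rw [lemniscate, ← C_1, natDegree_sub_C]
  exact (natDegree_C_mul_le _ _).trans natDegree_map_le

lemma natDegree_lemniscate [IsDomain R] {f : R[X]} (hf : f ≠ 0) (F : R[X]) :
    (lemniscate f F).natDegree = F.natDegree := by
  rw [lemniscate, ← C_1, natDegree_sub_C, natDegree_C_mul hf,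
    natDegree_map_eq_of_injective C_injective]

lemma eval_C_lemniscate (f F : R[X]) (b : R) :
    (lemniscate f F).eval (C b) = f * C (F.eval b) - 1 := by
  simp [lemniscate, eval_map_apply]

lemma natDegree_resultant_lemniscate_le (f F g G : R[X]) :
    (resultant (lemniscate f F) (lemniscate g G)).natDegree ≤
      F.natDegree * g.natDegree + G.natDegree * f.natDegree :=
  (natDegree_resultant_le _ _ (natDegree_coeff_lemniscate_le f F)
    (natDegree_coeff_lemniscate_le g G)).trans <| by
      gcongr <;> exact natDegree_lemniscate_le _ _

lemma exists_pow_eq_C_mul_pow_of_resultant_lemniscate_eq_zero {k : Type*} [Field k]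
    [IsAlgClosed k] {f F g G : k[X]}
    (hdeg : f.natDegree * G.natDegree = g.natDegree * F.natDegree)
    (h : resultant (lemniscate f F) (lemniscate g G) = 0) :
    ∃ c, f ^ g.natDegree = C c * g ^ f.natDegree := by
  let Ω := AlgebraicClosure (RatFunc k)
  have : FaithfulSMul k[X] Ω := .trans k[X] (RatFunc k) Ω
  let t : Ω := algebraMap k[X] Ω X
  have algebraMap_eq (p : k[X]) : algebraMap k[X] Ω p = aeval t p := by
    rw [aeval_algebraMap_apply, aeval_X_left_apply]
  have ht : Transcendental k t := by
    refine transcendental_iff_injective.2 fun p q hpq ↦ ?_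
    exact FaithfulSMul.algebraMap_injective k[X] Ω (by simpa [algebraMap_eq] using hpq)
  have aeval_lemniscate (p P : k[X]) (s : Ω) :
      aeval s (lemniscate p P) = aeval t p * aeval s P - 1 := by
    rw [lemniscate, map_sub, map_mul, aeval_C, map_one, algebraMap_eq]
    exact congrArg (_ * · - 1) (aeval_map_algebraMap k[X] s P)
  obtain ⟨s, hf, hg⟩ := exists_common_root_of_resultant_eq_zero (Ω := Ω) h
  rw [aeval_lemniscate, sub_eq_zero] at hf hg
  exact exists_pow_eq_C_mul_pow_of_transcendental ht hdeg hf hg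

end Lemniscate

lemma dvd_of_forall_X_sub_C_pow_dvd {k : Type*} [Field k] [IsAlgClosed k] {p q : k[X]}
    (hp : p ≠ 0) (h : ∀ a i, (X - C a) ^ i ∣ p → (X - C a) ^ i ∣ q) : p ∣ q := by
  classical
  rcases eq_or_ne q 0 with rfl | hq
  · exact dvd_zero p
  rw [IsAlgClosed.dvd_iff_roots_le_roots hp hq, Multiset.le_iff_count]
  intro a
  rw [count_roots, count_roots, le_rootMultiplicity_iff hq]
  exact h a _ (pow_rootMultiplicity_dvd p a)

lemma X_sub_C_pow_dvd_sub_C_eval {R : Type*} [CommRing R] [IsDomain R] [CharZero R] {f : R[X]}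
    {a : R} {n i : ℕ} (hn : n ≠ 0) (ha : f.eval a ^ n = 1) (h : (X - C a) ^ i ∣ f ^ n - 1) :
    (X - C a) ^ i ∣ f - C (f.eval a) := by
  set q := ∑ j ∈ Finset.range n, f ^ j * C (f.eval a) ^ (n - 1 - j) with hq
  have hfactor : f ^ n - 1 = q * (f - C (f.eval a)) := by
    rw [hq, (Commute.all _ _).geom_sum₂_mul, ← C_pow, ha, C_1]
  have heval : q.eval a = n * f.eval a ^ (n - 1) := by
    simpa [hq, eval_finsetSum] using geom_sum₂_self (f.eval a) n
  have hne : ¬ X - C a ∣ q := by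
    rw [dvd_iff_isRoot, IsRoot, heval]
    have : f.eval a ≠ 0 := (IsUnit.of_pow_eq_one ha hn).ne_zero
    positivity
  rw [hfactor] at h
  exact (prime_X_sub_C a).pow_dvd_of_dvd_mul_left _ hne h

lemma eval_C_conj_lemniscate_map_conj {f : ℂ[X]} {a : ℂ} (ha : ‖f.eval a‖ = 1) :
    (lemniscate f (f.map (starRingEnd ℂ))).eval (C (starRingEnd ℂ a)) =
      C (starRingEnd ℂ (f.eval a)) * (f - C (f.eval a)) := by
  have hone : C (starRingEnd ℂ (f.eval a)) * C (f.eval a) = 1 := by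
    rw [← C_mul, Complex.conj_mul', ha]
    simp
  rw [eval_C_lemniscate, eval_map_apply, mul_sub, hone, mul_comm]

lemma X_sub_C_pow_dvd_eval_lemniscate_map_conj {f : ℂ[X]} {a : ℂ} {n i : ℕ} (hn : n ≠ 0)
    (h : (X - C a) ^ i ∣ f ^ n - 1) :
    (X - C a) ^ i ∣ (lemniscate f (f.map (starRingEnd ℂ))).eval (C (starRingEnd ℂ a)) := by
  rcases eq_or_ne i 0 with rfl | hi
  · simp
  have ha : f.eval a ^ n = 1 := by
    simpa [dvd_iff_isRoot, sub_eq_zero] using (dvd_pow_self (X - C a) hi).trans h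
  rw [eval_C_conj_lemniscate_map_conj (Complex.norm_eq_one_of_pow_eq_one ha hn)]
  exact (X_sub_C_pow_dvd_sub_C_eval hn ha h).mul_left _

lemma gcd_pow_sub_one_dvd_resultant_lemniscate {f g : ℂ[X]} {n m : ℕ} (hf : 0 < f.natDegree)
    (hn : n ≠ 0) (hm : m ≠ 0) :
    EuclideanDomain.gcd (f ^ n - 1) (g ^ m - 1) ∣
      resultant (lemniscate f (f.map (starRingEnd ℂ))) (lemniscate g (g.map (starRingEnd ℂ))) := by
  have hpow : f ^ n - 1 ≠ 0 := by
    refine ne_zero_of_natDegree_gt (n := 0) ?_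
    rw [← C_1, natDegree_sub_C, natDegree_pow]
    positivity
  have hgcd := EuclideanDomain.gcd_dvd_left (f ^ n - 1) (g ^ m - 1)
  refine dvd_of_forall_X_sub_C_pow_dvd (ne_zero_of_dvd_ne_zero hpow hgcd) fun a i hi ↦ ?_
  refine dvd_resultant_of_dvd_eval (r := C (starRingEnd ℂ a)) (.inl ?_)
    (X_sub_C_pow_dvd_eval_lemniscate_map_conj hn (hi.trans hgcd))
    (X_sub_C_pow_dvd_eval_lemniscate_map_conj hm (hi.trans (EuclideanDomain.gcd_dvd_right _ _)))
  rw [natDegree_lemniscate (ne_zero_of_natDegree_gt hf), natDegree_map]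
  exact hf.ne'

lemma pow_eq_pow_of_pow_eq_C_mul_pow {R : Type*} [CommSemiring R] {f g : R[X]} {c z : R}
    {i j n m : ℕ} (h : f ^ i = C c * g ^ j) (hf : f.eval z ^ n = 1) (hg : g.eval z ^ m = 1) :
    f ^ (i * (n * m)) = g ^ (j * (n * m)) := by
  have heval : f.eval z ^ i = c * g.eval z ^ j := by simpa using congrArg (eval z) h
  have hc : c ^ (n * m) = 1 := calc
    c ^ (n * m) = c ^ (n * m) * (g.eval z ^ m) ^ (n * j) := by rw [hg, one_pow, mul_one]
    _ = (c * g.eval z ^ j) ^ (n * m) := by ring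
    _ = (f.eval z ^ n) ^ (i * m) := by rw [← heval]; ring
    _ = 1 := by rw [hf, one_pow]
  rw [pow_mul, h, mul_pow, ← C_pow, hc, C_1, one_mul, ← pow_mul]

lemma exists_zpow_mul_zpow_eq_one_of_pow_eq_pow {G₀ : Type*} [GroupWithZero G₀] {x y : G₀}
    {i j : ℕ} (hy : y ≠ 0) (hj : j ≠ 0) (h : x ^ i = y ^ j) :
    ∃ ν₁ ν₂ : ℤ, (ν₁, ν₂) ≠ (0, 0) ∧ x ^ ν₁ * y ^ ν₂ = 1 := by
  refine ⟨i, -j, by simp [hj], ?_⟩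
  rw [zpow_neg, zpow_natCast, zpow_natCast, h, mul_inv_cancel₀ (pow_ne_zero j hy)]

lemma exists_zpow_mul_zpow_eq_one_of_resultant_lemniscate_eq_zero {k : Type*} [Field k]
    [IsAlgClosed k] {f F g G : k[X]} {z : k} {n m : ℕ} (hf : 0 < f.natDegree) (hn : n ≠ 0)
    (hm : m ≠ 0) (hdeg : f.natDegree * G.natDegree = g.natDegree * F.natDegree)
    (h : resultant (lemniscate f F) (lemniscate g G) = 0)
    (hfz : f.eval z ^ n = 1) (hgz : g.eval z ^ m = 1) :
    ∃ ν₁ ν₂ : ℤ, (ν₁, ν₂) ≠ (0, 0) ∧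
      algebraMap k[X] (RatFunc k) f ^ ν₁ * algebraMap k[X] (RatFunc k) g ^ ν₂ = 1 := by
  obtain ⟨c, hc⟩ := exists_pow_eq_C_mul_pow_of_resultant_lemniscate_eq_zero hdeg h
  have hpow : f ^ (g.natDegree * (n * m)) = g ^ (f.natDegree * (n * m)) :=
    pow_eq_pow_of_pow_eq_C_mul_pow hc hfz hgz
  have hg : g ≠ 0 := by
    rintro rfl
    simp [hm] at hgz
  refine exists_zpow_mul_zpow_eq_one_of_pow_eq_pow (i := g.natDegree * (n * m))
    (j := f.natDegree * (n * m)) (by simpa using hg) (by positivity) ?_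
  rw [← map_pow, hpow, map_pow]

theorem stmt_6_general (f g : ℂ[X])
    (hind : ¬ ∃ (ν₁ ν₂ : ℤ), (ν₁, ν₂) ≠ (0, 0) ∧
      (algebraMap ℂ[X] (RatFunc ℂ) f) ^ ν₁ * (algebraMap ℂ[X] (RatFunc ℂ) g) ^ ν₂ = 1)
    (n m : ℕ) (hn : 1 ≤ n) (hm : 1 ≤ m) :
    (EuclideanDomain.gcd (f ^ n - 1) (g ^ m - 1)).natDegree ≤ 2 * f.natDegree * g.natDegree := by
  set D := EuclideanDomain.gcd (f ^ n - 1) (g ^ m - 1)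
  have hDf : D ∣ f ^ n - 1 := EuclideanDomain.gcd_dvd_left _ _
  have hDg : D ∣ g ^ m - 1 := EuclideanDomain.gcd_dvd_right _ _
  rcases Nat.eq_zero_or_pos f.natDegree with hf | hf
  · have hpow : f ^ n - 1 ≠ 0 := fun h ↦ hind
      ⟨n, 0, by simp [Nat.one_le_iff_ne_zero.1 hn], by simp [← map_pow, sub_eq_zero.1 h]⟩
    refine (natDegree_le_of_dvd hDf hpow).trans ?_
    rw [← C_1, natDegree_sub_C, natDegree_pow, hf]
    simp
  set f' := f.map (starRingEnd ℂ)
  set g' := g.map (starRingEnd ℂ)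
  have hf' : f'.natDegree = f.natDegree := natDegree_map _
  have hg' : g'.natDegree = g.natDegree := natDegree_map _
  by_cases hR : resultant (lemniscate f f') (lemniscate g g') = 0
  · suffices D.natDegree = 0 by simp [this]
    by_contra hD
    obtain ⟨z, hz⟩ := IsAlgClosed.exists_root D fun h ↦ hD (natDegree_eq_of_degree_eq_some h)
    have hfz : f.eval z ^ n = 1 := by simpa [sub_eq_zero] using hz.dvd hDf
    have hgz : g.eval z ^ m = 1 := by simpa [sub_eq_zero] using hz.dvd hDg
    exact hind <| exists_zpow_mul_zpow_eq_one_of_resultant_lemniscate_eq_zero hf (by lia) (by lia)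
      (by rw [hf', hg', mul_comm]) hR hfz hgz
  · calc
      D.natDegree ≤ (resultant (lemniscate f f') (lemniscate g g')).natDegree :=
        natDegree_le_of_dvd (gcd_pow_sub_one_dvd_resultant_lemniscate hf (by lia) (by lia)) hR
      _ ≤ _ := natDegree_resultant_lemniscate_le f f' g g'
      _ = 2 * f.natDegree * g.natDegree := by rw [hf', hg']; ring

/-- Lemma 2.2 (uniform Ailon–Rudnick): if `f, g` are multiplicatively independent
nonconstant polynomials, then `deg gcd(fⁿ − 1, gᵐ − 1) ≤ (11 (d_f + d_g)²)^{min(d_f, d_g)}`. -/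
theorem stmt_6 (f g : Polynomial ℂ)
    (hf : 0 < f.natDegree) (hg : 0 < g.natDegree)
    (hind : ¬ ∃ (ν₁ ν₂ : ℤ), (ν₁, ν₂) ≠ (0, 0) ∧
      (algebraMap (Polynomial ℂ) (RatFunc ℂ) f) ^ ν₁ *
        (algebraMap (Polynomial ℂ) (RatFunc ℂ) g) ^ ν₂ = 1)
    (n m : ℕ) (hn : 1 ≤ n) (hm : 1 ≤ m) :
    (EuclideanDomain.gcd (f ^ n - 1) (g ^ m - 1)).natDegree ≤
      (11 * (f.natDegree + g.natDegree) ^ 2) ^ (min f.natDegree g.natDegree) :=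
  calc
    _ ≤ 2 * f.natDegree * g.natDegree := stmt_6_general f g hind n m hn hm
    _ ≤ 11 * (f.natDegree + g.natDegree) ^ 2 := by nlinarith
    _ ≤ _ := Nat.le_self_pow (lt_min hf hg).ne' _
end

section
/- Let f, g ∈ ℂ[T] be nonconstant multiplicatively independent polynomials with gcd(f − 1, g − 1) = 1. Then there are infinitely many integers n ≥ 1 such that gcd(fⁿ − 1, gⁿ − 1) = 1. -/
open Polynomial

/-!
Let `K` be generated by the coefficients of `f` and `g` over a purely transcendental extension `F`
of `ℚ`, arranged so that `K / F` is finite. Suppose `p` is prime and `t` is a common root of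
`f ^ p - 1` and `g ^ p - 1`. As `f - 1` and `g - 1` are coprime, one of `f t`, `g t` is a primitive
`p`-th root of unity. Cyclotomic polynomials are irreducible over `F`, so `t` has degree at least
`(p - 1) / [K : F]` over `K`. On the other hand the `p`-th roots of unity `f t` and `g t` satisfy a
relation `f t ^ a * g t ^ b = f t ^ c * g t ^ d` with exponents at most `√p`, by the pigeonhole
principle; multiplicative independence makes this a nontrivial equation for `t`, so the degree of
`t` over `K` is `O(√p)`. This is impossible for large `p`.
-/

open Filter Module

/-- Multiplicative independence of two elements of a commutative monoid. A relation
`x ^ a * y ^ b = 1` with `a b : ℤ` is encoded by moving the negative powers to the other side, so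
that polynomials can be treated without passing to the fraction field. -/
def MulIndependent {M : Type*} [CommMonoid M] (x y : M) : Prop :=
  Function.Injective fun m : ℕ × ℕ ↦ x ^ m.1 * y ^ m.2

namespace MulIndependent

theorem of_map {M N G : Type*} [CommMonoid M] [CommMonoid N] [FunLike G M N] [MonoidHomClass G M N]
    (φ : G) {x y : M} (h : MulIndependent (φ x) (φ y)) : MulIndependent x y := fun m n hmn ↦
  h (by simpa only [map_mul, map_pow] using congrArg φ hmn)

theorem of_zpow {G : Type*} [CommGroupWithZero G] {x y : G} (hx : x ≠ 0) (hy : y ≠ 0)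
    (h : ∀ a b : ℤ, x ^ a * y ^ b = 1 → (a, b) = (0, 0)) : MulIndependent x y := by
  rintro ⟨a, b⟩ ⟨c, d⟩ (hrel : x ^ a * y ^ b = x ^ c * y ^ d)
  have hquot : x ^ ((a : ℤ) - c) * y ^ ((b : ℤ) - d) = 1 := by
    rw [zpow_sub₀ hx, zpow_sub₀ hy, div_mul_div_comm]
    simp only [zpow_natCast]
    rw [hrel, div_self (by positivity)]
  have hzero := h _ _ hquot
  simp only [Prod.mk.injEq] at hzero ⊢
  omega

end MulIndependent

section Cyclotomic

theorem irreducible_cyclotomic_of_ringHom_rat {R K : Type*} [CommRing R] [IsDomain R]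
    [IsIntegrallyClosed R] [Field K] [Algebra R K] [IsFractionRing R K] (φ : R →+* ℚ) {n : ℕ}
    (hn : 0 < n) : Irreducible (cyclotomic n K) := by
  have hR : Irreducible (cyclotomic n R) :=
    (cyclotomic.monic n R).irreducible_of_irreducible_map φ _ <| by
      simpa only [map_cyclotomic] using cyclotomic.irreducible_rat hn
  simpa only [map_cyclotomic] using
    ((cyclotomic.monic n R).irreducible_iff_irreducible_map_fraction_map (K := K)).1 hR

open scoped IntermediateField.algebraAdjoinAdjoin in
theorem irreducible_cyclotomic_adjoin_of_algebraicIndependent {ι L : Type*} [Field L] [Algebra ℚ L]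
    {x : ι → L} (hx : AlgebraicIndependent ℚ x) {n : ℕ} (hn : 0 < n) :
    Irreducible (cyclotomic n (IntermediateField.adjoin ℚ (Set.range x))) := by
  have : IsIntegrallyClosed (Algebra.adjoin ℚ (Set.range x)) :=
    .of_equiv hx.aevalEquiv.toRingEquiv
  exact irreducible_cyclotomic_of_ringHom_rat
    ((MvPolynomial.aeval (0 : ι → ℚ)).comp hx.aevalEquiv.symm.toAlgHom).toRingHom hn

theorem exists_finiteDimensional_irreducible_cyclotomic {L : Type*} [Field L] [CharZero L]
    (S : Set L) [Finite S] :
    ∃ (F : IntermediateField ℚ L) (K : IntermediateField F L), S ⊆ K ∧ FiniteDimensional F K ∧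
      ∀ n, 0 < n → Irreducible (cyclotomic n F) := by
  obtain ⟨ι, x, hx⟩ := exists_isTranscendenceBasis' ℚ L
  have := hx.isAlgebraic_field
  exact ⟨.adjoin ℚ (Set.range x), .adjoin _ S, IntermediateField.subset_adjoin _ S,
    IntermediateField.finiteDimensional_adjoin fun y _ ↦ Algebra.IsIntegral.isIntegral y,
    fun n hn ↦ irreducible_cyclotomic_adjoin_of_algebraicIndependent hx.1 hn⟩

end Cyclotomic

section DegreeBounds

variable {F K L : Type*} [Field F] [Field K] [Field L] [Algebra F K] [Algebra F L] [Algebra K L]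
  [IsScalarTower F K L] [FiniteDimensional F K]

theorem natDegree_minpoly_aeval_le_finrank_mul {t : L} (ht : IsIntegral K t) (h : K[X]) :
    (minpoly F (aeval t h)).natDegree ≤ finrank F K * (minpoly K t).natDegree := by
  let E := IntermediateField.adjoin K {t}
  have : FiniteDimensional K E := IntermediateField.adjoin.finiteDimensional ht
  have : FiniteDimensional F E := .trans F K E
  have : IsScalarTower F E L := .to₁₃₄ F K E L
  let s : E := aeval (IntermediateField.AdjoinSimple.gen K t) h
  have hs : algebraMap E L s = aeval t h := by
    rw [← aeval_algebraMap_apply, IntermediateField.AdjoinSimple.algebraMap_gen]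
  calc (minpoly F (aeval t h)).natDegree
      = (minpoly F s).natDegree := by rw [← hs, minpoly.algebraMap_eq (algebraMap E L).injective]
    _ ≤ finrank F E := minpoly.natDegree_le s
    _ = finrank F K * (minpoly K t).natDegree := by
      rw [← finrank_mul_finrank F K E, IntermediateField.adjoin.finrank ht]

theorem totient_le_finrank_mul_natDegree_minpoly {n : ℕ} (hn : 0 < n)
    (hirr : Irreducible (cyclotomic n F)) {t : L} (ht : IsIntegral K t) {h : K[X]}
    (hprim : IsPrimitiveRoot (aeval t h) n) :
    n.totient ≤ finrank F K * (minpoly K t).natDegree := by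
  have hroot : aeval (aeval t h) (cyclotomic n F) = 0 := by
    rw [aeval_def, eval₂_eq_eval_map, map_cyclotomic]
    exact hprim.isRoot_cyclotomic hn
  rw [← natDegree_cyclotomic n F,
    minpoly.eq_of_irreducible_of_monic hirr hroot (cyclotomic.monic n F)]
  exact natDegree_minpoly_aeval_le_finrank_mul ht h

theorem exists_ne_pow_mul_pow_eq_of_pow_eq_one {R : Type*} [CommRing R] [IsDomain R] {n : ℕ}
    (hn : 0 < n) {x y : R} (hx : x ^ n = 1) (hy : y ^ n = 1) :
    ∃ a ≤ (n.sqrt, n.sqrt), ∃ b ≤ (n.sqrt, n.sqrt),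
      a ≠ b ∧ x ^ a.1 * y ^ a.2 = x ^ b.1 * y ^ b.2 := by
  classical
  have hcard : (nthRootsFinset n (1 : R)).card < (Finset.Iic (n.sqrt, n.sqrt)).card := by
    calc (nthRootsFinset n (1 : R)).card
        ≤ n := (Multiset.toFinset_card_le _).trans (card_nthRoots n 1)
      _ < (n.sqrt + 1) * (n.sqrt + 1) := Nat.lt_succ_sqrt n
      _ = (Finset.Iic (n.sqrt, n.sqrt)).card := by simp only [Finset.card_Iic_prod, Nat.card_Iic]
  have hmaps : Set.MapsTo (fun a : ℕ × ℕ ↦ x ^ a.1 * y ^ a.2) (Finset.Iic (n.sqrt, n.sqrt))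
      (nthRootsFinset n (1 : R)) := fun a _ ↦ by
    rw [Finset.mem_coe, mem_nthRootsFinset hn, mul_pow, pow_right_comm, hx, pow_right_comm, hy,
      one_pow, one_pow, one_mul]
  simpa only [Finset.mem_Iic] using Finset.exists_ne_map_eq_of_card_lt_of_maps_to hcard hmaps

theorem natDegree_pow_mul_pow_le {R : Type*} [Semiring R] (f g : R[X]) {a : ℕ × ℕ} {s : ℕ}
    (ha : a ≤ (s, s)) :
    (f ^ a.1 * g ^ a.2).natDegree ≤ s * (f.natDegree + g.natDegree) := by
  calc (f ^ a.1 * g ^ a.2).natDegree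
      ≤ a.1 * f.natDegree + a.2 * g.natDegree :=
        natDegree_mul_le_of_le natDegree_pow_le natDegree_pow_le
    _ ≤ s * f.natDegree + s * g.natDegree := by
        gcongr
        exacts [ha.1, ha.2]
    _ = s * (f.natDegree + g.natDegree) := (mul_add ..).symm

theorem MulIndependent.isIntegral_and_natDegree_minpoly_le {f g : K[X]}
    (hind : MulIndependent f g) {n : ℕ} (hn : 0 < n) {t : L} (hf : aeval t f ^ n = 1)
    (hg : aeval t g ^ n = 1) :
    IsIntegral K t ∧ (minpoly K t).natDegree ≤ n.sqrt * (f.natDegree + g.natDegree) := by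
  obtain ⟨a, ha, b, hb, hab, heq⟩ := exists_ne_pow_mul_pow_eq_of_pow_eq_one hn hf hg
  let P : K[X] := f ^ a.1 * g ^ a.2 - f ^ b.1 * g ^ b.2
  have hP : P ≠ 0 := sub_ne_zero.2 (hind.ne hab)
  have hPt : aeval t P = 0 := by
    simp only [P, map_sub, map_mul, map_pow, heq, sub_self]
  exact ⟨IsAlgebraic.isIntegral ⟨P, hP, hPt⟩,
    (natDegree_le_of_dvd (minpoly.dvd K t hPt) hP).trans <| (natDegree_sub_le _ _).trans <|
      max_le (natDegree_pow_mul_pow_le f g ha) (natDegree_pow_mul_pow_le f g hb)⟩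

end DegreeBounds

section Coprimality

theorem isCoprime_pow_sub_one_of_prime {F K : Type*} [Field F] [Field K] [Algebra F K]
    [FiniteDimensional F K] {f g : K[X]} (hind : MulIndependent f g)
    (hcop : IsCoprime (f - 1) (g - 1)) {p : ℕ} (hp : p.Prime) (hirr : Irreducible (cyclotomic p F))
    (hlarge : finrank F K * (p.sqrt * (f.natDegree + g.natDegree)) < p - 1) :
    IsCoprime (f ^ p - 1) (g ^ p - 1) := by
  rw [isCoprime_iff_aeval_ne_zero_of_isAlgClosed K (AlgebraicClosure K)]
  intro t
  by_contra! hroot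
  simp only [map_sub, map_pow, map_one, sub_eq_zero] at hroot
  obtain ⟨hint, hdeg⟩ := hind.isIntegral_and_natDegree_minpoly_le hp.pos hroot.1 hroot.2
  have hprim : ∃ h : K[X], IsPrimitiveRoot (aeval t h) p := by
    have : Fact p.Prime := ⟨hp⟩
    rcases aeval_ne_zero_of_isCoprime hcop t with hf | hg
    · rw [map_sub, map_one, sub_ne_zero] at hf
      exact ⟨f, IsPrimitiveRoot.iff_orderOf.2 (orderOf_eq_prime hroot.1 hf)⟩
    · rw [map_sub, map_one, sub_ne_zero] at hg
      exact ⟨g, IsPrimitiveRoot.iff_orderOf.2 (orderOf_eq_prime hroot.2 hg)⟩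
  obtain ⟨h, hprim⟩ := hprim
  refine hlarge.not_ge ?_
  calc p - 1
      = p.totient := (Nat.totient_prime hp).symm
    _ ≤ finrank F K * (minpoly K t).natDegree :=
      totient_le_finrank_mul_natDegree_minpoly hp.pos hirr hint hprim
    _ ≤ finrank F K * (p.sqrt * (f.natDegree + g.natDegree)) := by gcongr

theorem eventually_mul_sqrt_lt_sub_one (C : ℕ) : ∀ᶠ n : ℕ in atTop, C * n.sqrt < n - 1 := by
  filter_upwards [eventually_ge_atTop ((C + 2) * (C + 2))] with n hn
  have hsqrt : C + 2 ≤ n.sqrt := Nat.le_sqrt.2 hn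
  have hmul : (C + 2) * n.sqrt ≤ n := (Nat.mul_le_mul_right _ hsqrt).trans (Nat.sqrt_le n)
  rw [add_mul] at hmul
  omega

theorem stmt_15_general {k : Type*} [Field k] [CharZero k] {f g : k[X]}
    (hind : MulIndependent f g) (hcop : IsCoprime (f - 1) (g - 1)) :
    ∀ᶠ p : ℕ in atTop, p.Prime → IsCoprime (f ^ p - 1) (g ^ p - 1) := by
  classical
  obtain ⟨F, K, hK, _, hirr⟩ :=
    exists_finiteDimensional_irreducible_cyclotomic (↑(f.coeffs ∪ g.coeffs) : Set k)
  rw [Finset.coe_union, Set.union_subset_iff] at hK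
  obtain ⟨f, rfl⟩ : ∃ f' : K[X], f'.map (algebraMap K k) = f :=
    ⟨f.toSubring K.toSubring hK.1, f.map_toSubring K.toSubring hK.1⟩
  obtain ⟨g, rfl⟩ : ∃ g' : K[X], g'.map (algebraMap K k) = g :=
    ⟨g.toSubring K.toSubring hK.2, g.map_toSubring K.toSubring hK.2⟩
  have hindK : MulIndependent f g := hind.of_map (mapRingHom (algebraMap K k))
  have hcopK : IsCoprime (f - 1) (g - 1) :=
    (isCoprime_map (algebraMap K k)).1 <| by simpa only [Polynomial.map_sub, Polynomial.map_one]
  filter_upwards [eventually_mul_sqrt_lt_sub_one (finrank F K * (f.natDegree + g.natDegree))]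
    with p hlarge hp
  have hcop_pow : IsCoprime (f ^ p - 1) (g ^ p - 1) :=
    isCoprime_pow_sub_one_of_prime hindK hcopK hp (hirr p hp.pos) <| by
      rwa [mul_left_comm, mul_comm]
  simpa only [Polynomial.map_sub, Polynomial.map_pow, Polynomial.map_one] using
    (isCoprime_map (algebraMap K k)).2 hcop_pow

end Coprimality

/-- Diagonal coprimality: if `f, g` are multiplicatively independent nonconstant
polynomials with `gcd(f − 1, g − 1) = 1`, then `gcd(fⁿ − 1, gⁿ − 1) = 1` for
infinitely many `n ≥ 1`. -/
theorem stmt_15 (f g : Polynomial ℂ)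
    (hf : 0 < f.natDegree) (hg : 0 < g.natDegree)
    (hind : ¬ ∃ (ν₁ ν₂ : ℤ), (ν₁, ν₂) ≠ (0, 0) ∧
      (algebraMap (Polynomial ℂ) (RatFunc ℂ) f) ^ ν₁ *
        (algebraMap (Polynomial ℂ) (RatFunc ℂ) g) ^ ν₂ = 1)
    (hcop : IsCoprime (f - 1) (g - 1)) :
    {n : ℕ | 1 ≤ n ∧ IsCoprime (f ^ n - 1) (g ^ n - 1)}.Infinite := by
  have hfg : MulIndependent f g := .of_map (algebraMap ℂ[X] (RatFunc ℂ)) <| .of_zpow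
    (RatFunc.algebraMap_ne_zero (ne_zero_of_natDegree_gt hf))
    (RatFunc.algebraMap_ne_zero (ne_zero_of_natDegree_gt hg))
    fun a b hab ↦ by_contra fun hne ↦ hind ⟨a, b, hne, hab⟩
  exact Nat.frequently_atTop_iff_infinite.1 <|
    ((Nat.frequently_atTop_iff_infinite.2 Nat.infinite_setOfPred_prime).and_eventually
      (stmt_15_general hfg hcop)).mono fun p hp ↦ ⟨hp.1.one_le, hp.2 hp.1⟩
end
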